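/- (Recursive shape computation) Let p_1,...,p_k be all the maximal elements of a finite poset P, and suppose the Greene shapes λ(P - {p_1}) = ... = λ(P - {p_k}) = λ' all coincide. Then λ(P) is obtained from λ' by adding one box to the k-th row: λ_k(P) = λ'_k + 1 and λ_i(P) = λ'_i for i ≠ k. -/

import Mathlib

open Finset

/-- `cMax α k` is the maximal cardinality of a union of `k` pairwise disjoint chains
in the finite poset `α`. -/
noncomputable def cMax (α : Type*) [PartialOrder α] [Fintype α] [DecidableEq α] (k : ℕ) : ℕ :=
  sSup {n : ℕ | ∃ f : Fin k → Finset α,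
    (∀ i, IsChain (· ≤ ·) (↑(f i) : Set α)) ∧
    Pairwise (Function.onFun Disjoint f) ∧
    n = (Finset.univ.biUnion f).card}

/-- `aMax α k` is the maximal cardinality of a union of `k` pairwise disjoint antichains
in the finite poset `α`. -/
noncomputable def aMax (α : Type*) [PartialOrder α] [Fintype α] [DecidableEq α] (k : ℕ) : ℕ :=
  sSup {n : ℕ | ∃ f : Fin k → Finset α,
    (∀ i, IsAntichain (· ≤ ·) (↑(f i) : Set α)) ∧
    Pairwise (Function.onFun Disjoint f) ∧
    n = (Finset.univ.biUnion f).card}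

/-- The `k`-th row length of the Greene shape `λ(α)`. -/
noncomputable def lam (α : Type*) [PartialOrder α] [Fintype α] [DecidableEq α] (k : ℕ) : ℕ :=
  cMax α k - cMax α (k - 1)

/-- The `k`-th column length of the Greene shape, `μ_k = a_k - a_{k-1}`. -/
noncomputable def mu (α : Type*) [PartialOrder α] [Fintype α] [DecidableEq α] (k : ℕ) : ℕ :=
  aMax α k - aMax α (k - 1)


section GK

def pathW {V : Type*} (w : V → V → ℤ) : List V → ℤ
  | [] => 0
  | [_] => 0
  | a :: b :: l => w b a + pathW w (b :: l)

theorem path_cut {V : Type*} [Fintype V] [DecidableEq V] (w : V → V → ℤ) (hw : ∀ r, w r r = 0)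
    (y : V) : ∀ (l : List V) (x : V), (x :: l).Nodup → y ∈ x :: l →
      ∃ (l2 : List V) (τ : Equiv.Perm V), (y :: l2).Nodup ∧
        (∑ r, w r (τ r)) + pathW w (y :: l2) = pathW w (x :: l) + w x y ∧
        τ x = y ∧ ∀ z, z ∉ x :: l → τ z = z := by
  intro l
  induction l with
  | nil =>
    intro x hn hy
    have : y = x := by simpa using hy
    subst this
    exact ⟨[], 1, hn, by simp [hw, pathW], by simp, by simp⟩
  | cons x' l ih =>
    intro x hn hy
    by_cases hyx : y = x
    · subst hyx
      exact ⟨x' :: l, 1, hn, by simp [hw], by simp, by simp⟩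
    · have hy' : y ∈ x' :: l := by
        rcases List.mem_cons.1 hy with h | h
        · exact absurd h hyx
        · exact h
      have hn' := (List.nodup_cons.1 hn)
      obtain ⟨l2, τ, h1, h2, h3, h4⟩ := ih x' hn'.2 hy'
      have hxx' : x ≠ x' := by
        rintro rfl
        exact hn'.1 (by simp)
      have hτx : τ x = x := h4 x hn'.1
      refine ⟨l2, τ * Equiv.swap x' x, h1, ?_, by simp [h3], ?_⟩
      · have key : ∑ r, (w r ((τ * Equiv.swap x' x) r) - w r (τ r)) = w x' x + w x y - w x' y := by
          rw [Fintype.sum_eq_add x x' hxx']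
          · simp [h3, hτx, hw]; ring
          · rintro z ⟨hz1, hz2⟩
            simp [Equiv.swap_apply_of_ne_of_ne hz2 hz1]
        rw [Finset.sum_sub_distrib] at key
        simp only [pathW]
        linarith
      · intro z hz
        have hz1 : z ≠ x := by rintro rfl; exact hz (by simp)
        have hz3 : z ∉ x' :: l := fun h => hz (List.mem_cons_of_mem _ h)
        have hz2 : z ≠ x' := by rintro rfl; exact hz3 (by simp)
        simp [Equiv.swap_apply_of_ne_of_ne hz2 hz1, h4 z hz3]

theorem exists_potential {V : Type*} [Fintype V] [DecidableEq V] (w : V → V → ℤ)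
    (hw : ∀ r, w r r = 0) (hτ : ∀ τ : Equiv.Perm V, 0 ≤ ∑ r, w r (τ r)) :
    ∃ π : V → ℤ, ∀ x y, π y ≤ π x + w x y := by
  have hmin : ∀ y : V, ∃ l : List V, (y :: l).Nodup ∧
      ∀ l' : List V, (y :: l').Nodup → pathW w (y :: l) ≤ pathW w (y :: l') := by
    intro y
    have : Finite {l : List V // (y :: l).Nodup} :=
      Finite.of_injective
        (fun l => (⟨y :: l.1, l.2⟩ : {l : List V // l.Nodup}))
        (by
          intro a b h
          have := congrArg Subtype.val h
          simp only [List.cons.injEq, true_and] at this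
          exact Subtype.ext this)
    have : Nonempty {l : List V // (y :: l).Nodup} := ⟨⟨[], by simp⟩⟩
    obtain ⟨l, hl⟩ := Finite.exists_min (fun l : {l : List V // (y :: l).Nodup} => pathW w (y :: l.1))
    exact ⟨l.1, l.2, fun l' h' => hl ⟨l', h'⟩⟩
  choose L hL1 hL2 using hmin
  refine ⟨fun y => pathW w (y :: L y), fun x y => ?_⟩
  by_cases hy : y ∈ x :: L x
  · obtain ⟨l2, τ, h1, h2, -, -⟩ := path_cut w hw y (L x) x (hL1 x) hy
    have := hL2 y l2 h1
    have := hτ τ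
    simp only
    linarith
  · have := hL2 y (x :: L x) (List.nodup_cons.2 ⟨hy, hL1 x⟩)
    simp only [pathW] at this ⊢
    linarith

theorem perm_chains {α : Type*} [PartialOrder α] [Fintype α] [DecidableEq α] (i : ℕ)
    (σ : Equiv.Perm (α ⊕ Fin i)) (hσ : ∀ x y, σ (.inl x) = .inl y → x ≤ y) :
    ∃ f : Fin i → Finset α, (∀ a, IsChain (· ≤ ·) (↑(f a) : Set α)) ∧
      Pairwise (Function.onFun Disjoint f) ∧
      ∀ x, σ (.inl x) ≠ .inl x → x ∈ Finset.univ.biUnion f := by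
  classical
  let Q : Fin i → ℕ → α → Prop := fun a n x => σ^[n+1] (.inr a) = .inl x ∧
    ∀ j ≤ n, ∃ z, σ^[j+1] (.inr a) = .inl z
  have hmono : ∀ a m n x y, Q a n x → Q a (n+m) y → x ≤ y := by
    intro a m
    induction m with
    | zero =>
      intro n x y hx hy
      have := hx.1.symm.trans hy.1
      simp at this
      exact this.le
    | succ m ih =>
      intro n x y hx hy
      obtain ⟨z, hz⟩ := hy.2 (n+m) (by omega)
      have h1 := ih n x z hx ⟨hz, fun j hj => hy.2 j (by omega)⟩
      refine h1.trans (hσ z y ?_)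
      rw [← hz, ← hy.1, ← Function.iterate_succ_apply' σ]
      rfl
  have hinj : ∀ a b n m x, n ≤ m → Q a n x → Q b m x → a = b := by
    intro a b n m x hnm ha hb
    obtain ⟨d, rfl⟩ := Nat.exists_eq_add_of_le hnm
    have h : σ^[n+1] (.inr a) = σ^[n+1] (σ^[d] (.inr b)) := by
      rw [← Function.iterate_add_apply, ha.1, show n + 1 + d = n + d + 1 by omega, hb.1]
    have h2 := (σ.injective.iterate (n+1)) h
    cases d with
    | zero => simpa using h2
    | succ d =>
      obtain ⟨z, hz⟩ := hb.2 d (by omega)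
      rw [hz] at h2
      simp at h2
  refine ⟨fun a => Finset.univ.filter (fun x => ∃ n, Q a n x), ?_, ?_, ?_⟩
  · intro a x hx y hy _
    simp only [Finset.coe_filter, Finset.mem_univ, true_and, Set.mem_ofPred_eq] at hx hy
    obtain ⟨n, hn⟩ := hx
    obtain ⟨m, hm⟩ := hy
    rcases le_total n m with h | h
    · obtain ⟨d, rfl⟩ := Nat.exists_eq_add_of_le h
      exact Or.inl (hmono _ _ _ _ _ hn hm)
    · obtain ⟨d, rfl⟩ := Nat.exists_eq_add_of_le h
      exact Or.inr (hmono _ _ _ _ _ hm hn)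
  · intro a b hab
    rw [Function.onFun, Finset.disjoint_left]
    intro x hx hy
    simp only [Finset.mem_filter, Finset.mem_univ, true_and] at hx hy
    obtain ⟨n, hn⟩ := hx
    obtain ⟨m, hm⟩ := hy
    rcases le_total n m with h | h
    · exact hab (hinj _ _ _ _ _ h hn hm)
    · exact hab (hinj _ _ _ _ _ h hm hn).symm
  · intro x
    induction x using WellFoundedLT.induction with
    | ind x ih =>
      intro hx
      simp only [Finset.mem_biUnion, Finset.mem_filter, Finset.mem_univ, true_and] at ih ⊢
      obtain ⟨c, hc⟩ := σ.surjective (.inl x)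
      rcases c with y | a
      · have hyx : y ≠ x := by rintro rfl; exact hx hc
        have hlt : y < x := lt_of_le_of_ne (hσ _ _ hc) hyx
        obtain ⟨a, n, hn⟩ := ih y hlt (by rw [hc]; simpa using hyx.symm)
        have hs : σ^[n+1+1] (.inr a) = .inl x := by
          rw [Function.iterate_succ_apply', hn.1, hc]
        refine ⟨a, n+1, hs, fun j hj => ?_⟩
        rcases Nat.lt_or_ge j (n+1) with h | h
        · exact hn.2 j (by omega)
        · obtain rfl : j = n + 1 := by omega
          exact ⟨x, hs⟩
      · refine ⟨a, 0, by simpa using hc, fun j hj => ?_⟩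
        obtain rfl : j = 0 := by omega
        exact ⟨x, by simpa using hc⟩

theorem greene_dual {α : Type*} [PartialOrder α] [Fintype α] [DecidableEq α] (i : ℕ) (hi : 1 ≤ i) :
    ∃ (l : ℕ) (B : Finset α),
      (∀ C : Finset α, C ⊆ B → IsChain (· ≤ ·) (↑C : Set α) → C.card ≤ l) ∧
      ∃ f : Fin i → Finset α, (∀ a, IsChain (· ≤ ·) (↑(f a) : Set α)) ∧
        Pairwise (Function.onFun Disjoint f) ∧
        Bᶜ.card + i * l ≤ (Finset.univ.biUnion f).card := by
  classical
  let cost : α ⊕ Fin i → α ⊕ Fin i → ℤ := fun r c =>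
    Sum.elim (fun x => Sum.elim (fun y => if x < y then 0 else if x = y then 1
      else (Fintype.card α : ℤ) + 1) (fun _ => 0) c) (fun _ => 0) r
  have cost_nn : ∀ r c, 0 ≤ cost r c := by
    rintro (x | a) (y | b) <;> simp only [cost, Sum.elim_inl, Sum.elim_inr] <;>
      first | rfl | (split_ifs <;> omega)
  obtain ⟨σ, hσ⟩ := Finite.exists_min (fun σ : Equiv.Perm (α ⊕ Fin i) => ∑ r, cost r (σ r))
  have htot : ∑ r, cost r (σ r) ≤ Fintype.card α := by
    refine (hσ 1).trans ?_
    simp [cost, Fintype.sum_sum_type]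
  have hle : ∀ x y, σ (.inl x) = .inl y → x ≤ y := by
    intro x y hxy
    by_contra hn
    have h1 : cost (.inl x) (σ (.inl x)) ≤ ∑ r, cost r (σ r) :=
      Finset.single_le_sum (f := fun r => cost r (σ r)) (fun r _ => cost_nn _ _) (Finset.mem_univ _)
    rw [hxy] at h1
    have h2 : ¬ x < y := fun h => hn h.le
    have h3 : ¬ x = y := fun h => hn h.le
    simp only [cost, Sum.elim_inl, if_neg h2, if_neg h3] at h1
    simp only [cost] at htot
    linarith
  obtain ⟨f, hf1, hf2, hf3⟩ := perm_chains i σ hle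
  have hcov : (Fintype.card α : ℤ) - ∑ r, cost r (σ r) ≤ (Finset.univ.biUnion f).card := by
    have h1 : (((Finset.univ.biUnion f)ᶜ).card : ℤ) ≤ ∑ r, cost r (σ r) := by
      rw [Fintype.sum_sum_type]
      have h2 : (((Finset.univ.biUnion f)ᶜ).card : ℤ) ≤ ∑ x, cost (.inl x) (σ (.inl x)) := by
        rw [Finset.card_eq_sum_ones, Nat.cast_sum]
        refine (Finset.sum_le_sum (g := fun x => cost (.inl x) (σ (.inl x))) ?_).trans
          (Finset.sum_le_univ_sum_of_nonneg (fun x => cost_nn _ _))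
        intro x hx
        have : σ (.inl x) = .inl x := by
          by_contra h
          exact (Finset.mem_compl.1 hx) (hf3 x h)
        rw [this]
        simp [cost]
      have h3 : 0 ≤ ∑ x, cost (.inr x) (σ (.inr x)) := Finset.sum_nonneg (fun x _ => cost_nn _ _)
      linarith
    rw [Finset.card_compl, Nat.cast_sub (Finset.card_le_univ _)] at h1
    linarith
  obtain ⟨π, hπ⟩ := exists_potential (fun r r' => cost r (σ r') - cost r (σ r)) (by simp)
    (by
      intro τ
      rw [Finset.sum_sub_distrib]
      have := hσ (σ * τ)
      simp only [Equiv.Perm.mul_apply] at this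
      linarith)
  obtain ⟨u, hu⟩ : ∃ u : α ⊕ Fin i → ℤ, u = fun r => cost r (σ r) - π r := ⟨_, rfl⟩
  obtain ⟨v, hv⟩ : ∃ v : α ⊕ Fin i → ℤ, v = fun c => π (σ.symm c) := ⟨_, rfl⟩
  have huv : ∀ r c, u r + v c ≤ cost r c := by
    intro r c
    have := hπ r (σ.symm c)
    simp only [Equiv.apply_symm_apply] at this
    rw [hu, hv]
    simp only
    linarith
  have heq : ∀ r, u r + v (σ r) = cost r (σ r) := by
    intro r; rw [hu, hv]; simp
  have hsum : ∑ r, u r + ∑ c, v c = ∑ r, cost r (σ r) := by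
    rw [← Equiv.sum_comp σ v, ← Finset.sum_add_distrib]
    exact Finset.sum_congr rfl (fun r _ => heq r)
  clear hu hv hπ
  have cr : ∀ a c, cost (.inr a) c = 0 := fun a c => rfl
  have cc : ∀ r b, cost r (.inr b) = 0 := by rintro (x | a) b <;> rfl
  let a0 : Fin i := ⟨0, hi⟩
  have hU : ∀ a, u (.inr a) = u (.inr a0) := by
    have : ∀ a b, u (.inr a) ≤ u (.inr b) := by
      intro a b
      have h1 := huv (.inr a) (σ (.inr b))
      have h2 := heq (.inr b)
      rw [cr] at h1 h2
      linarith
    exact fun a => le_antisymm (this _ _) (this _ _)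
  have hV : ∀ a, v (.inr a) = v (.inr a0) := by
    have : ∀ a b, v (.inr a) ≤ v (.inr b) := by
      intro a b
      have h1 := huv (σ.symm (.inr b)) (.inr a)
      have h2 := heq (σ.symm (.inr b))
      rw [Equiv.apply_symm_apply] at h2
      rw [cc] at h1 h2
      linarith
    exact fun a => le_antisymm (this _ _) (this _ _)
  generalize hUe : u (.inr a0) = U at hU
  generalize hVe : v (.inr a0) = W at hV
  have hUW : U + W ≤ 0 := by
    have := huv (.inr a0) (.inr a0)
    rw [cr, hUe, hVe] at this
    exact this
  have hux : ∀ x, u (.inl x) + W ≤ 0 := by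
    intro x
    have := huv (.inl x) (.inr a0)
    rwa [cc, hVe] at this
  have hvx : ∀ x, U + v (.inl x) ≤ 0 := by
    intro x
    have := huv (.inr a0) (.inl x)
    rwa [cr, hUe] at this
  have hlt : ∀ x y, x < y → u (.inl x) + v (.inl y) ≤ 0 := by
    intro x y h
    have := huv (.inl x) (.inl y)
    simpa [cost, h] using this
  have hxx : ∀ x, u (.inl x) + v (.inl x) ≤ 1 := by
    intro x
    have := huv (.inl x) (.inl x)
    simpa [cost] using this
  refine ⟨(-U - W).toNat, Finset.univ.filter (fun x => u (.inl x) + v (.inl x) = 1),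
    ?_, f, hf1, hf2, ?_⟩
  · intro C hCB hC
    have hB : ∀ x ∈ C, u (.inl x) + v (.inl x) = 1 := fun x hx => by
      simpa using hCB hx
    have h1 : C.card ≤ (Finset.Icc (1 + W) (-U)).card := by
      refine Finset.card_le_card_of_injOn (fun x => v (.inl x)) ?_ ?_
      · intro x hx
        have h1 := hB x hx
        have h2 := hux x
        have h3 := hvx x
        simp only [Finset.coe_Icc, Set.mem_Icc]
        constructor <;> linarith
      · intro x hx y hy hxy
        simp only at hxy
        by_contra hne
        have h1 := hB x hx
        have h2 := hB y hy
        rcases hC hx hy hne with h | h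
        · have := hlt x y (lt_of_le_of_ne h hne)
          linarith
        · have := hlt y x (lt_of_le_of_ne h (Ne.symm hne))
          linarith
    rw [Int.card_Icc] at h1
    refine h1.trans (le_of_eq ?_)
    congr 1
    ring
  · have h1 : ∑ x, (u (.inl x) + v (.inl x)) ≤
        ((Finset.univ.filter (fun x : α => u (.inl x) + v (.inl x) = 1)).card : ℤ) := by
      rw [Finset.card_filter, Nat.cast_sum]
      refine Finset.sum_le_sum (fun x _ => ?_)
      have := hxx x
      split_ifs with h
      · simpa using this
      · push_cast; omega
    rw [Fintype.sum_sum_type u, Fintype.sum_sum_type v] at hsum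
    simp only [hU, hV, Finset.sum_const, Finset.card_univ, Fintype.card_fin, nsmul_eq_mul] at hsum
    rw [Finset.sum_add_distrib] at h1
    zify
    rw [Finset.card_compl, Nat.cast_sub (Finset.card_le_univ _), Int.toNat_of_nonneg (by linarith)]
    have : (i : ℤ) * (-U - W) = -(i * U) - i * W := by ring
    linarith

end GK

/-- families of `k` disjoint chains -/
def ChFam {α : Type*} [PartialOrder α] {k : ℕ} (f : Fin k → Finset α) : Prop :=
  (∀ i, IsChain (· ≤ ·) (↑(f i) : Set α)) ∧ Pairwise (Function.onFun Disjoint f)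

section
variable {α : Type*} [PartialOrder α] [Fintype α] [DecidableEq α]

theorem cMax_bdd (k : ℕ) : BddAbove {n : ℕ | ∃ f : Fin k → Finset α,
    (∀ i, IsChain (· ≤ ·) (↑(f i) : Set α)) ∧
    Pairwise (Function.onFun Disjoint f) ∧
    n = (Finset.univ.biUnion f).card} := by
  refine ⟨Fintype.card α, ?_⟩
  rintro n ⟨f, -, -, rfl⟩
  exact Finset.card_le_univ _

theorem le_cMax {k : ℕ} {f : Fin k → Finset α} (hf : ChFam f) :
    (Finset.univ.biUnion f).card ≤ cMax α k :=
  le_csSup (cMax_bdd k) ⟨f, hf.1, hf.2, rfl⟩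

theorem exists_cMax (α : Type*) [PartialOrder α] [Fintype α] [DecidableEq α] (k : ℕ) :
    ∃ f : Fin k → Finset α, ChFam f ∧ (Finset.univ.biUnion f).card = cMax α k := by
  have hne : {n : ℕ | ∃ f : Fin k → Finset α,
    (∀ i, IsChain (· ≤ ·) (↑(f i) : Set α)) ∧
    Pairwise (Function.onFun Disjoint f) ∧
    n = (Finset.univ.biUnion f).card}.Nonempty :=
    ⟨_, fun _ => ∅, by simp, fun _ _ _ => by simp [Function.onFun], rfl⟩
  obtain ⟨f, h1, h2, h3⟩ := Nat.sSup_mem hne (cMax_bdd k)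
  exact ⟨f, ⟨h1, h2⟩, h3.symm⟩

theorem cMax_zero : cMax α 0 = 0 := by
  obtain ⟨f, -, h⟩ := exists_cMax α 0
  rw [← h]; simp

theorem cMax_succ (k : ℕ) : cMax α k ≤ cMax α (k+1) := by
  obtain ⟨f, hf, h⟩ := exists_cMax α k
  rw [← h]
  have hg : ChFam (Fin.cons ∅ f : Fin (k+1) → Finset α) := by
    constructor
    · intro i
      refine Fin.cases ?_ (fun j => ?_) i
      · simp
      · simpa using hf.1 j
    · intro i j
      refine Fin.cases ?_ (fun i => ?_) i <;> refine Fin.cases ?_ (fun j => ?_) j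
      · simp
      · simp [Function.onFun]
      · simp [Function.onFun]
      · intro hij
        have := hf.2 (i := i) (j := j) (by rintro rfl; exact hij rfl)
        simpa [Function.onFun] using this
  refine le_trans (Finset.card_le_card ?_) (le_cMax hg)
  intro x hx
  simp only [Finset.mem_biUnion, Finset.mem_univ, true_and] at hx ⊢
  obtain ⟨a, ha⟩ := hx
  exact ⟨a.succ, by simpa using ha⟩

theorem cMax_sub_ge (p : α) {k : ℕ} {f : Fin k → Finset α} (hf : ChFam f) (hp : ∀ a, p ∉ f a) :
    (Finset.univ.biUnion f).card ≤ cMax {x : α // x ≠ p} k := by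
  have hg : ChFam (fun a => (f a).subtype (fun x => x ≠ p)) := by
    constructor
    · intro a x hx y hy hxy
      simp only [Finset.mem_coe, Finset.mem_subtype] at hx hy
      exact hf.1 a hx hy (fun h => hxy (Subtype.ext h))
    · intro a b hab
      have := hf.2 hab
      simp only [Function.onFun, Finset.disjoint_left, Finset.mem_subtype] at this ⊢
      exact fun x hx => this hx
  refine le_trans (le_of_eq ?_) (le_cMax hg)
  rw [← Finset.card_map (Function.Embedding.subtype (fun x => x ≠ p))]
  congr 1
  ext x
  simp only [Finset.mem_biUnion, Finset.mem_univ, true_and, Finset.mem_map, Finset.mem_subtype,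
    Function.Embedding.coe_subtype]
  constructor
  · rintro ⟨a, ha⟩
    exact ⟨⟨x, fun h => hp a (h ▸ ha)⟩, ⟨a, ha⟩, rfl⟩
  · rintro ⟨y, ⟨a, ha⟩, rfl⟩
    exact ⟨a, ha⟩

theorem exists_cMax_sub (p : α) (k : ℕ) : ∃ f : Fin k → Finset α, ChFam f ∧ (∀ a, p ∉ f a) ∧
    (Finset.univ.biUnion f).card = cMax {x : α // x ≠ p} k := by
  obtain ⟨f, hf, h⟩ := exists_cMax {x : α // x ≠ p} k
  refine ⟨fun a => (f a).map (Function.Embedding.subtype (fun x => x ≠ p)), ⟨?_, ?_⟩, ?_, ?_⟩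
  · intro a x hx y hy hxy
    simp only [Finset.coe_map, Set.mem_image, Finset.mem_coe, Function.Embedding.coe_subtype] at hx hy
    obtain ⟨x, hx, rfl⟩ := hx
    obtain ⟨y, hy, rfl⟩ := hy
    exact hf.1 a hx hy (fun h => hxy (by rw [h]))
  · intro a b hab
    have := hf.2 hab
    simpa [Function.onFun] using this
  · intro a; simp
  · rw [← h, ← Finset.card_map (Function.Embedding.subtype (fun x => x ≠ p))]
    congr 1
    ext x
    simp only [Finset.mem_biUnion, Finset.mem_univ, true_and, Finset.mem_map]
    constructor
    · rintro ⟨a, y, hy, rfl⟩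
      exact ⟨y, ⟨a, hy⟩, rfl⟩
    · rintro ⟨y, ⟨a, hy⟩, rfl⟩
      exact ⟨a, y, hy, rfl⟩

theorem cMax_sub_le (p : α) (k : ℕ) : cMax {x : α // x ≠ p} k ≤ cMax α k := by
  obtain ⟨f, hf, -, h⟩ := exists_cMax_sub p k
  rw [← h]; exact le_cMax hf

theorem cMax_le_sub (p : α) (k : ℕ) : cMax α k ≤ cMax {x : α // x ≠ p} k + 1 := by
  obtain ⟨f, hf, h⟩ := exists_cMax α k
  have hg : ChFam (fun a => (f a).erase p) := by
    constructor
    · intro a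
      exact (hf.1 a).mono (by simp)
    · intro a b hab
      exact Finset.disjoint_of_subset_left (Finset.erase_subset _ _)
        (Finset.disjoint_of_subset_right (Finset.erase_subset _ _) (hf.2 hab))
  have h1 := cMax_sub_ge p hg (by simp)
  rw [← h]
  have h2 : (Finset.univ.biUnion fun a => (f a).erase p) = (Finset.univ.biUnion f).erase p := by
    ext x; simp
  rw [h2] at h1
  have := Finset.pred_card_le_card_erase (s := Finset.univ.biUnion f) (a := p)
  omega

theorem cMax_lt (ps : Finset α) (hps : ∀ x : α, x ∈ ps ↔ ∀ y : α, x ≤ y → y = x) (i : ℕ)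
    (hi : i < ps.card) : ∃ p ∈ ps, cMax α i ≤ cMax {x : α // x ≠ p} i := by
  obtain ⟨f, hf, h⟩ := exists_cMax α i
  by_cases hc : ∃ p ∈ ps, ∀ a, p ∉ f a
  · obtain ⟨p, hp, ha⟩ := hc
    exact ⟨p, hp, h ▸ cMax_sub_ge p hf ha⟩
  · push Not at hc
    exfalso
    obtain ⟨p0, hp0⟩ := Finset.card_pos.1 (by omega : 0 < ps.card)
    obtain ⟨a0, -⟩ := hc p0 hp0
    have : Nonempty (Fin i) := ⟨a0⟩
    choose! g hg using hc
    have : ps.card ≤ (Finset.univ : Finset (Fin i)).card := by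
      refine Finset.card_le_card_of_injOn g (by simp) ?_
      intro x hx y hy hxy
      by_contra hne
      have h1 := hg x hx
      have h2 := hg y hy
      rw [← hxy] at h2
      rcases hf.1 _ h1 h2 hne with h | h
      · exact hne (((hps x).1 hx y h).symm)
      · exact hne ((hps y).1 hy x h)
    simp at this
    omega

theorem exists_max_above (ps : Finset α) (hps : ∀ x : α, x ∈ ps ↔ ∀ y : α, x ≤ y → y = x) (x : α) :
    ∃ p ∈ ps, x ≤ p := by
  obtain ⟨p, hp, hm⟩ := Set.Finite.exists_le_maximal (Set.toFinite (Set.univ : Set α)) (Set.mem_univ x)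
  exact ⟨p, (hps p).2 (fun y hy => le_antisymm (hm.2 trivial hy) hy), hp⟩

theorem cMax_ge (ps : Finset α) (hps : ∀ x : α, x ∈ ps ↔ ∀ y : α, x ≤ y → y = x) (i : ℕ)
    (hi : ps.card ≤ i) (p0 : α) (hp0 : p0 ∈ ps) :
    ∃ p ∈ ps, cMax {x : α // x ≠ p} i < cMax α i := by
  by_contra hcon
  push Not at hcon
  have hi1 : 1 ≤ i := le_trans (Finset.card_pos.2 ⟨p0, hp0⟩) hi
  obtain ⟨l, B, hB, f, hf1, hf2, hf3⟩ := greene_dual (α := α) i hi1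
  have hlow := hf3.trans (le_cMax ⟨hf1, hf2⟩)
  have main : ∀ p ∈ ps, ∃ g : Fin i → Finset α, ChFam g ∧ (∀ a, p ∉ g a) ∧ p ∈ B ∧
      ∀ a, (g a ∩ B).card = l := by
    intro p hp
    obtain ⟨g, hg, hpg, hc⟩ := exists_cMax_sub p i
    have hle := hlow.trans ((hcon p hp).trans hc.symm.le)
    have hch : ∀ a, (g a ∩ B).card ≤ l := fun a =>
      hB _ Finset.inter_subset_right ((hg.1 a).mono (by simp))
    have e1 : (Finset.univ.biUnion g).card ≤ (Bᶜ.erase p).card + ∑ a, (g a ∩ B).card := by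
      have hsub : Finset.univ.biUnion g ⊆ Bᶜ.erase p ∪ Finset.univ.biUnion (fun a => g a ∩ B) := by
        intro x hx
        simp only [Finset.mem_biUnion, Finset.mem_univ, true_and] at hx
        obtain ⟨a, ha⟩ := hx
        by_cases hxB : x ∈ B
        · exact Finset.mem_union_right _ (by simpa [hxB] using ⟨a, ha⟩)
        · refine Finset.mem_union_left _ ?_
          simp only [Finset.mem_erase, Finset.mem_compl]
          exact ⟨fun h => hpg a (h ▸ ha), hxB⟩
      exact (Finset.card_le_card hsub).trans ((Finset.card_union_le _ _).trans
        (Nat.add_le_add_left Finset.card_biUnion_le _))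
    have e2 : ∑ a, (g a ∩ B).card ≤ i * l := by
      have := Finset.sum_le_sum (s := Finset.univ) (fun a _ => hch a)
      simpa using this
    have e3 : (Bᶜ.erase p).card ≤ Bᶜ.card := Finset.card_le_card (Finset.erase_subset _ _)
    refine ⟨g, hg, hpg, ?_, ?_⟩
    · by_contra hpB
      have : (Bᶜ.erase p).card < Bᶜ.card := Finset.card_erase_lt_of_mem (by simpa using hpB)
      omega
    · have e4 : ∑ a, (g a ∩ B).card = ∑ a : Fin i, l := by
        simp only [Finset.sum_const, Finset.card_univ, Fintype.card_fin, smul_eq_mul]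
        omega
      intro a
      exact (Finset.sum_eq_sum_iff_of_le (fun a _ => hch a)).1 e4 a (Finset.mem_univ a)
  obtain ⟨g, hg, hpg, hpB, hgl⟩ := main p0 hp0
  have hpsB : ∀ p ∈ ps, p ∈ B := fun p hp => by
    obtain ⟨_, _, _, h, _⟩ := main p hp
    exact h
  have hl : 1 ≤ l := by
    have := hB {p0} (by simpa using hpB) (by simp)
    simpa using this
  have top : ∀ a, ∃ t ∈ g a, t ∈ ps.erase p0 := by
    intro a
    have hne : (g a ∩ B).Nonempty := by
      rw [← Finset.card_pos, hgl]; exact hl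
    obtain ⟨t, ht⟩ := Finset.exists_maximal hne
    have htm := Finset.mem_inter.1 ht.1
    obtain ⟨q, hq, htq⟩ := exists_max_above ps hps t
    have hqt : q ∈ g a ∩ B := by
      by_contra hqn
      have hall : ∀ y ∈ g a ∩ B, y ≤ q := by
        intro y hy
        refine le_trans ?_ htq
        rcases (hg.1 a).total (Finset.mem_inter.1 hy).1 htm.1 with h | h
        · exact h
        · exact ht.2 hy h
      have := hB (insert q (g a ∩ B)) (by
        intro y hy
        rcases Finset.mem_insert.1 hy with rfl | hy
        · exact hpsB _ hq
        · exact (Finset.mem_inter.1 hy).2) (by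
        rw [Finset.coe_insert]
        refine IsChain.insert ((hg.1 a).mono (by simp)) ?_
        intro b hb _
        exact Or.inr (hall b hb))
      rw [Finset.card_insert_of_notMem hqn, hgl] at this
      omega
    refine ⟨q, (Finset.mem_inter.1 hqt).1, Finset.mem_erase.2 ⟨?_, hq⟩⟩
    rintro rfl
    exact hpg a (Finset.mem_inter.1 hqt).1
  choose t ht1 ht2 using top
  have : (Finset.univ : Finset (Fin i)).card ≤ (ps.erase p0).card := by
    refine Finset.card_le_card_of_injOn t (fun a _ => ht2 a) ?_
    intro a _ b _ hab
    by_contra hne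
    have hd := hg.2 hne
    rw [Function.onFun, Finset.disjoint_left] at hd
    exact hd (ht1 a) (hab ▸ ht1 b)
  have h2 := Finset.card_erase_lt_of_mem hp0
  simp at this
  omega

end

theorem recursive_shape_equal_case
    (α : Type*) [PartialOrder α] [Fintype α] [DecidableEq α] [Nonempty α]
    (ps : Finset α) (hps : ∀ x : α, x ∈ ps ↔ ∀ y : α, x ≤ y → y = x)
    (heq : ∀ p ∈ ps, ∀ q ∈ ps, ∀ i : ℕ,
      lam {x : α // x ≠ p} i = lam {x : α // x ≠ q} i) :
    ∀ p ∈ ps, ∀ i : ℕ, 1 ≤ i →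
      lam α i = lam {x : α // x ≠ p} i + (if i = ps.card then 1 else 0) := by
  intro p hp i hi
  have hc : ∀ q ∈ ps, ∀ j, cMax {x : α // x ≠ p} j = cMax {x : α // x ≠ q} j := by
    intro q hq j
    induction j with
    | zero => rw [cMax_zero, cMax_zero]
    | succ j ih =>
      have h := heq p hp q hq (j+1)
      have h1 := cMax_succ (α := {x : α // x ≠ p}) j
      have h2 := cMax_succ (α := {x : α // x ≠ q}) j
      simp only [lam, Nat.add_sub_cancel] at h
      omega
  have hk : ∀ j, cMax α j = cMax {x : α // x ≠ p} j + (if ps.card ≤ j then 1 else 0) := by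
    intro j
    have h1 := cMax_sub_le p j
    have h2 := cMax_le_sub p j
    split_ifs with h
    · obtain ⟨q, hq, h3⟩ := cMax_ge ps hps j h p hp
      rw [← hc q hq] at h3
      omega
    · obtain ⟨q, hq, h3⟩ := cMax_lt ps hps j (by omega)
      rw [← hc q hq] at h3
      omega
  have hpos : 1 ≤ ps.card := Finset.card_pos.2 ⟨p, hp⟩
  obtain ⟨j, rfl⟩ := Nat.exists_eq_add_of_le' hi
  have h1 := cMax_succ (α := {x : α // x ≠ p}) j
  simp only [lam, Nat.add_sub_cancel]
  rw [hk (j+1), hk j]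
  split_ifs <;> omega
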